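/- A basic element $b \in GL_n(L)$ is superbasic if and only if the valuation of $\det(b)$ is relatively prime to $n$. -/

import Mathlib

open Matrix

variable (K : Type*) [Field K]

/-- The standard representative of the basic `σ`-conjugacy class of slope `d/n` in
`GL_n(L)`, `L = K((ε))`: the matrix sending `e_j ↦ e_{j+1}` cyclically, with the wrap-around
entry equal to `ε^d`. -/
noncomputable def basicRep (n : ℕ) [NeZero n] (d : ℤ) :
    Matrix (Fin n) (Fin n) (LaurentSeries K) := fun i j =>
  if i = j + 1 then
    (if (j : ℕ) = n - 1 then HahnSeries.single d (1 : K) else 1)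
  else 0

/-!
Up to `σ`-conjugation, a basic element is the cyclic matrix `C` with `C ^ n = ϖ ^ d`.

If a `σ`-conjugate preserves a coordinate subspace of dimension `r`, acting on it through `H`, then
the `n`-th iterate of the `σ`-linear operator `C ∘ σ` is `ϖ ^ d • σ ^ n`, and comparing determinants
on the subspace gives `n * v (det H) = r * d`. When `gcd(d, n) = 1` this forces `n ∣ r`.

If `c = gcd(d, n) > 1`, put `A = ϖ ^ (-d / c) • C ^ (n / c)`, so that `A ^ c = 1`. Choose `u` with
`σ ^ n u = u` and trace `1` over the fixed field of `σ ^ (n / c)`, and let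
`D = diag(u, σ u, …, σ ^ (n - 1) u)`. Since `D C = C σ(D)`, the weighted average `D ∑ A ^ l` over
`l < c` is an idempotent commuting with `C ∘ σ`, and its image and kernel form a proper splitting.
-/

section TwistedConjugation

variable {ι R : Type*} [Fintype ι] [DecidableEq ι]

/-- The `σ`-conjugate `g⁻¹ * b * σ(g)` of `b`, with `σ` applied entrywise. -/
def twistedConj [CommRing R] (σ : R →+* R) (g b : GL ι R) : GL ι R :=
  g⁻¹ * b * Units.map σ.mapMatrix.toMonoidHom g

/-- `b` is superbasic if no `σ`-conjugate of `b` lies in a proper Levi subgroup. Every such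
subgroup is conjugate to one of block-diagonal matrices for a partition of the index set into two
nonempty parts `S` and `Sᶜ`, so only these are tested. -/
def IsSuperbasic [CommRing R] (σ : R →+* R) (b : GL ι R) : Prop :=
  ¬ ∃ (g : GL ι R) (S : Finset ι), S.Nonempty ∧ S ≠ Finset.univ ∧
    ∀ i j : ι, (i ∈ S ∧ j ∉ S) ∨ (j ∈ S ∧ i ∉ S) → (twistedConj σ g b : Matrix ι ι R) i j = 0

theorem coe_mul_twistedConj [CommRing R] (σ : R →+* R) (g b : GL ι R) :
    (g : Matrix ι ι R) * twistedConj σ g b = b * (g : Matrix ι ι R).map σ := by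
  rw [← Units.val_mul, twistedConj, mul_assoc, mul_inv_cancel_left]
  rfl

theorem twistedConj_mul [CommRing R] (σ : R →+* R) (g h b : GL ι R) :
    twistedConj σ (g * h) b = twistedConj σ h (twistedConj σ g b) := by
  simp only [twistedConj, map_mul, _root_.mul_inv_rev, mul_assoc]

theorem isSuperbasic_twistedConj_iff [CommRing R] (σ : R →+* R) (g b : GL ι R) :
    IsSuperbasic σ (twistedConj σ g b) ↔ IsSuperbasic σ b := by
  rw [iff_comm, IsSuperbasic, (Group.mulLeft_bijective g).surjective.exists]
  simp only [twistedConj_mul, IsSuperbasic]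

omit [DecidableEq ι] in
theorem exists_basis_mulVec_eq_self_or_eq_zero [Field R] {E : Matrix ι ι R}
    (hE : IsIdempotentElem E) :
    ∃ w : Module.Basis ι R (ι → R), ∀ i, E *ᵥ w i = w i ∨ E *ᵥ w i = 0 := by
  classical
  have hφ : IsIdempotentElem E.toLin' := by
    rw [IsIdempotentElem, Module.End.mul_eq_comp, ← toLin'_mul, hE.eq]
  let v := ((Module.finBasis R _).prod (Module.finBasis R _)).map
    (Submodule.prodEquivOfIsCompl _ _ (LinearMap.IsIdempotentElem.isCompl hφ))
  refine ⟨v.reindex (v.indexEquiv (Pi.basisFun R ι)), fun i => ?_⟩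
  rw [Module.Basis.reindex_apply]
  rcases (v.indexEquiv (Pi.basisFun R ι)).symm i with j | j
  · left
    simpa [v] using (LinearMap.IsIdempotentElem.mem_range_iff hφ).1 (Module.finBasis R _ j).2
  · right
    have hker := LinearMap.mem_ker.1 (Module.finBasis R (LinearMap.ker E.toLin') j).2
    simpa only [v, toLin'_apply, Module.Basis.map_apply, Module.Basis.prod_apply, Sum.elim_inr,
      Function.comp_apply, LinearMap.coe_inr, Submodule.coe_prodEquivOfIsCompl',
      ZeroMemClass.coe_zero, zero_add] using hker

theorem exists_mul_eq_mul_diagonal_of_isIdempotentElem [Field R] {E : Matrix ι ι R}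
    (hE : IsIdempotentElem E) :
    ∃ (g : GL ι R) (S : Finset ι),
      E * (g : Matrix ι ι R) = g * diagonal fun i => if i ∈ S then (1 : R) else 0 := by
  classical
  obtain ⟨w, hw⟩ := exists_basis_mulVec_eq_self_or_eq_zero hE
  have hunit : IsUnit ((Pi.basisFun R ι).toMatrix w) :=
    letI := (Pi.basisFun R ι).invertibleToMatrix w
    isUnit_of_invertible _
  refine ⟨hunit.unit, ({i | E *ᵥ w i = w i} : Finset ι), ?_⟩
  ext i j
  have hcol : (E * (Pi.basisFun R ι).toMatrix w) i j = (E *ᵥ w j) i := by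
    simp [mul_apply, mulVec, dotProduct, Module.Basis.toMatrix_apply]
  rw [IsUnit.unit_spec, hcol, mul_diagonal, Module.Basis.toMatrix_apply, Pi.basisFun_repr]
  by_cases hj : E *ᵥ w j = w j
  · simp [hj]
  · rw [if_neg (by simpa using hj), mul_zero, (hw j).resolve_left hj, Pi.zero_apply]

theorem not_isSuperbasic_of_isIdempotentElem [Field R] {σ : R →+* R} {b : GL ι R}
    {E : Matrix ι ι R} (hE : IsIdempotentElem E) (hE0 : E ≠ 0) (hE1 : E ≠ 1)
    (hEb : E * b = b * E.map σ) : ¬ IsSuperbasic σ b := by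
  obtain ⟨g, S, hg⟩ := exists_mul_eq_mul_diagonal_of_isIdempotentElem hE
  set D : Matrix ι ι R := diagonal fun i => if i ∈ S then 1 else 0 with hD
  have hEg : E = g * D * (g⁻¹ : GL ι R) := by rw [← hg, mul_assoc, Units.mul_inv, mul_one]
  have hDσ : D.map σ = D := by
    simp [hD, diagonal_map, apply_ite σ]
  have hcomm : D * twistedConj σ g b = twistedConj σ g b * D := by
    refine g.isUnit.mul_left_cancel ?_
    calc (g : Matrix ι ι R) * (D * twistedConj σ g b)
        = E * (b * (g : Matrix ι ι R).map σ) := by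
          rw [← coe_mul_twistedConj, ← mul_assoc, ← mul_assoc, hg]
      _ = b * (E * (g : Matrix ι ι R)).map σ := by
          rw [← mul_assoc, hEb, Matrix.map_mul, mul_assoc]
      _ = g * (twistedConj σ g b * D) := by
          rw [hg, Matrix.map_mul, hDσ, ← mul_assoc, ← coe_mul_twistedConj, mul_assoc]
  refine not_not_intro ⟨g, S, ?_, ?_, fun i j hij => ?_⟩
  · rw [Finset.nonempty_iff_ne_empty]
    rintro rfl
    exact hE0 (by simp [hEg, hD])
  · rintro rfl
    exact hE1 (by simp [hEg, hD])
  · have hentry := congrFun (congrFun hcomm i) j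
    rw [hD, diagonal_mul, mul_diagonal] at hentry
    rcases hij with ⟨hi, hj⟩ | ⟨hj, hi⟩
    · simpa [hi, hj] using hentry
    · simpa [hi, hj] using hentry.symm

end TwistedConjugation

section Slope

theorem exists_submatrix_det_ne_zero {R ι r : Type*} [CommRing R] [Nontrivial R] [Fintype ι]
    [Fintype r] [DecidableEq r] {Y : Matrix r ι R} {X : Matrix ι r R} (hYX : Y * X = 1) :
    ∃ f : r → ι, (X.submatrix f id).det ≠ 0 := by
  classical
  by_contra! hX
  have hexpand : (Y * X).det = ∑ f : r → ι, (∏ i, Y i (f i)) * (X.submatrix f id).det := by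
    have hrows : Y * X = fun i => ∑ j, Y i j • X j := by
      ext i j
      simp [mul_apply]
    rw [hrows]
    change detRowAlternating.toMultilinearMap _ = _
    rw [MultilinearMap.map_sum]
    exact Finset.sum_congr rfl fun f _ => MultilinearMap.map_smul_univ _ _ _
  simp [hYX, hX] at hexpand

variable {L Γ ι r : Type*} [Field L] [LinearOrderedAddCommGroupWithTop Γ] [Fintype ι]
  [DecidableEq ι] [Fintype r] [DecidableEq r] {v : AddValuation L Γ} {σ : L →+* L}

omit [DecidableEq ι] in
theorem map_det_of_mul_eq_smul_map (hv : ∀ x, v (σ x) = v x) {X : Matrix ι r L}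
    {Y : Matrix r ι L} (hYX : Y * X = 1) {P : Matrix r r L} {a : L} (hP : X * P = a • X.map σ) :
    v P.det = Fintype.card r • v a := by
  obtain ⟨f, hf⟩ := exists_submatrix_det_ne_zero hYX
  have hminor : X.submatrix f id * P = a • σ.mapMatrix (X.submatrix f id) :=
    Matrix.ext fun i j => congrFun (congrFun hP (f i)) j
  have hval := congrArg (v ∘ det) hminor
  simp only [Function.comp_apply, det_mul, det_smul, ← RingHom.map_det, hv,
    AddValuation.map_mul, AddValuation.map_pow] at hval
  rw [add_comm] at hval
  exact (add_left_inj_of_ne_top ((AddValuation.ne_top_iff v).2 hf)).1 hval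

theorem exists_mul_eq_pow_mul_map {C : Matrix ι ι L} (hv : ∀ x, v (σ x) = v x)
    (hC : C.map σ = C) {X : Matrix ι r L} {H : Matrix r r L} (hX : X * H = C * X.map σ) (m : ℕ) :
    ∃ P : Matrix r r L, X * P = C ^ m * X.map (σ ^ m) ∧ v P.det = m • v H.det := by
  induction m with
  | zero => exact ⟨1, by simp⟩
  | succ m ih =>
    obtain ⟨P, hXP, hP⟩ := ih
    refine ⟨H * P.map σ, ?_, ?_⟩
    · have hCm : (C ^ m).map σ = C ^ m := by
        simpa [hC] using map_pow σ.mapMatrix C m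
      calc X * (H * P.map σ) = C * (X * P).map σ := by
            rw [← Matrix.mul_assoc, hX, Matrix.mul_assoc, Matrix.map_mul]
        _ = C ^ (m + 1) * X.map (σ ^ (m + 1)) := by
            rw [hXP, Matrix.map_mul, hCm, Matrix.map_map, ← Matrix.mul_assoc, ← pow_succ',
              pow_succ' σ, RingHom.coe_mul]
    · have hdet : (P.map σ).det = σ P.det := (RingHom.map_det σ P).symm
      rw [det_mul, AddValuation.map_mul, hdet, hv, hP, succ_nsmul']

/-- The columns of `X` span a subspace stable under `C ∘ σ`, whose restriction has matrix `H`. -/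
theorem nsmul_map_det_of_mul_eq_mul_map {C : Matrix ι ι L} (hv : ∀ x, v (σ x) = v x)
    (hC : C.map σ = C) {n : ℕ} {a : L} (hCn : C ^ n = a • (1 : Matrix ι ι L)) {X : Matrix ι r L}
    {Y : Matrix r ι L} (hYX : Y * X = 1) {H : Matrix r r L} (hX : X * H = C * X.map σ) :
    n • v H.det = Fintype.card r • v a := by
  obtain ⟨P, hXP, hP⟩ := exists_mul_eq_pow_mul_map hv hC hX n
  have hvn : ∀ x, v ((σ ^ n) x) = v x := fun x => by
    rw [RingHom.coe_pow]
    simpa using (show Function.Semiconj v σ id from hv).iterate_right n x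
  rw [hCn, Matrix.smul_mul, Matrix.one_mul] at hXP
  rw [← hP, map_det_of_mul_eq_smul_map hvn hYX hXP]

theorem map_det_twistedConj (hv : ∀ x, v (σ x) = v x) (g b : GL ι L) :
    v (twistedConj σ g b : Matrix ι ι L).det = v (b : Matrix ι ι L).det := by
  have hdet := congrArg (v ∘ det) (coe_mul_twistedConj σ g b)
  have hσdet : ((g : Matrix ι ι L).map σ).det = σ (g : Matrix ι ι L).det :=
    (RingHom.map_det σ _).symm
  simp only [Function.comp_apply, det_mul, AddValuation.map_mul, hσdet, hv] at hdet
  rw [add_comm] at hdet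
  exact (add_left_inj_of_ne_top ((AddValuation.ne_top_iff v).2
    (g.isUnit.map detMonoidHom).ne_zero)).1 hdet

theorem nsmul_map_det_submatrix_twistedConj (hv : ∀ x, v (σ x) = v x) {b : GL ι L}
    (hb : (b : Matrix ι ι L).map σ = b) {n : ℕ} {a : L}
    (hbn : (b : Matrix ι ι L) ^ n = a • (1 : Matrix ι ι L)) (g : GL ι L) (S : Finset ι)
    (hS : ∀ i j, i ∉ S → j ∈ S → (twistedConj σ g b : Matrix ι ι L) i j = 0) :
    n • v ((twistedConj σ g b : Matrix ι ι L).submatrix ((↑) : S → ι) (↑)).det =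
      S.card • v a := by
  rw [← Fintype.card_coe]
  refine nsmul_map_det_of_mul_eq_mul_map hv hb hbn
    (X := (g : Matrix ι ι L).submatrix id ((↑) : S → ι))
    (Y := ((g⁻¹ : GL ι L) : Matrix ι ι L).submatrix ((↑) : S → ι) id) ?_ ?_
  · rw [← submatrix_mul _ _ _ _ _ Function.bijective_id, Units.inv_mul,
      submatrix_one _ Subtype.val_injective]
  · ext i j
    have hentry := congrFun (congrFun (coe_mul_twistedConj σ g b) i) j
    simp only [mul_apply, submatrix_apply, map_apply, id] at hentry ⊢
    rw [← hentry, ← Finset.sum_subset (Finset.subset_univ S)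
      (fun l _ hl => by rw [hS l j hl j.2, mul_zero])]
    exact Finset.sum_coe_sort S fun l => (g : Matrix ι ι L) i l * twistedConj σ g b l j

end Slope

section Trace

open Function

theorem exists_sum_iterate_ne_zero {R : Type*} [CommRing R] [IsDomain R] (φ : R →+* R) {a : R}
    (ha : 0 < minimalPeriod φ a) :
    ∃ x, φ^[minimalPeriod φ a] x = x ∧ ∑ l ∈ Finset.range (minimalPeriod φ a), φ^[l] x ≠ 0 := by
  -- Otherwise all power sums of the distinct iterates `φ^[l] a` vanish, against Vandermonde.
  by_contra! hsum
  have hdistinct : Injective fun l : Fin (minimalPeriod φ a) => φ^[l] a := fun l l' h =>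
    Fin.ext ((iterate_eq_iterate_iff_of_lt_minimalPeriod l.2 l'.2).1 h)
  have hzero := eq_zero_of_forall_pow_sum_mul_pow_eq_zero (v := 1) hdistinct fun j => by
    have hj := hsum (a ^ (j : ℕ)) (by rw [iterate_map_pow, iterate_minimalPeriod])
    simpa only [iterate_map_pow, Pi.one_apply, one_mul, Finset.sum_range] using hj
  exact one_ne_zero (congrFun hzero ⟨0, ha⟩)

theorem exists_sum_iterate_eq_one {K : Type*} [Field K] (φ : K →+* K) {a : K}
    (ha : 0 < minimalPeriod φ a) :
    ∃ u, φ^[minimalPeriod φ a] u = u ∧ ∑ l ∈ Finset.range (minimalPeriod φ a), φ^[l] u = 1 := by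
  obtain ⟨x, hx, hxt⟩ := exists_sum_iterate_ne_zero φ ha
  set c := minimalPeriod φ a
  set t := ∑ l ∈ Finset.range c, φ^[l] x with ht
  have hφt : φ t = t := by
    have hshift := (Finset.sum_range_succ' (fun l => φ^[l] x) c).symm.trans
      (Finset.sum_range_succ (fun l => φ^[l] x) c)
    rw [iterate_zero_apply, hx] at hshift
    simpa only [ht, map_sum, ← iterate_succ_apply'] using add_right_cancel hshift
  have hdiv : ∀ l, φ^[l] (x / t) = φ^[l] x / t := fun l => by
    rw [← RingHom.coe_pow, map_div₀, RingHom.coe_pow, iterate_fixed hφt]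
  exact ⟨x / t, by rw [hdiv, hx], by simp only [hdiv, ← Finset.sum_div, ← ht, div_self hxt]⟩

end Trace

section TwistedAverage

variable {M : Type*} [Ring M] {τ : M →+* M} {A D : M}

theorem mul_pow_eq_pow_mul_iterate (hA : τ A = A) (hDA : D * A = A * τ D) (m : ℕ) :
    D * A ^ m = A ^ m * τ^[m] D := by
  induction m with
  | zero => simp
  | succ m ih =>
    calc D * A ^ (m + 1) = A * τ (D * A ^ m) := by
          rw [pow_succ', ← mul_assoc, hDA, mul_assoc, map_mul, map_pow, hA]
      _ = A ^ (m + 1) * τ^[m + 1] D := by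
          rw [ih, map_mul, map_pow, hA, ← mul_assoc, ← pow_succ', Function.iterate_succ_apply']

theorem geom_sum_mul_pow_of_pow_eq_one {c : ℕ} (hA : A ^ c = 1) (m : ℕ) :
    (∑ l ∈ Finset.range c, A ^ l) * A ^ m = ∑ l ∈ Finset.range c, A ^ l := by
  induction m with
  | zero => simp
  | succ m ih =>
    have hmul := geom_sum_mul A c
    rw [hA, sub_self, mul_sub, mul_one, sub_eq_zero] at hmul
    rw [pow_succ, ← mul_assoc, ih, hmul]

theorem isIdempotentElem_mul_geom_sum {c : ℕ} (hτA : τ A = A) (hDA : D * A = A * τ D)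
    (hAc : A ^ c = 1) (hD : ∑ l ∈ Finset.range c, τ^[l] D = 1) :
    IsIdempotentElem (D * ∑ l ∈ Finset.range c, A ^ l) := by
  set N := ∑ l ∈ Finset.range c, A ^ l with hN
  have hNDN : N * D * N = N := by
    calc N * D * N = ∑ l ∈ Finset.range c, N * A ^ l * τ^[l] D := by
          simp only [hN, Finset.mul_sum, mul_assoc, mul_pow_eq_pow_mul_iterate hτA hDA]
      _ = N * ∑ l ∈ Finset.range c, τ^[l] D := by
          rw [Finset.mul_sum]
          simp only [hN, geom_sum_mul_pow_of_pow_eq_one hAc]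
      _ = N := by rw [hD, mul_one]
  rw [IsIdempotentElem, mul_assoc, ← mul_assoc N, hNDN]

end TwistedAverage

section CyclicMatrix

variable {R : Type*} [CommRing R] (n : ℕ) [NeZero n]

/-- The matrix sending `e_j` to `e_{j+1}` for `j < n - 1` and `e_{n-1}` to `a • e_0`: the companion
matrix of `X ^ n - a`. With `a = ϖ ^ d` it represents the basic `σ`-conjugacy class of
slope `d / n`. -/
def cyclicMatrix (a : R) : Matrix (Fin n) (Fin n) R := fun i j =>
  if i = j + 1 then (if (j : ℕ) = n - 1 then a else 1) else 0

theorem cyclicMatrix_map (σ : R →+* R) (a : R) :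
    (cyclicMatrix n a).map σ = cyclicMatrix n (σ a) := by
  ext i j
  simp [cyclicMatrix, apply_ite σ]

theorem cyclicMatrix_mulVec_single (a : R) (j : Fin n) :
    cyclicMatrix n a *ᵥ Pi.single j 1 =
      Pi.single (j + 1) (if (j : ℕ) = n - 1 then a else 1) := by
  ext i
  rw [mulVec_single_one, col_apply, cyclicMatrix, Pi.single_apply]

variable {n}

theorem val_add_one_of_ne_pred {i : Fin n} (hi : (i : ℕ) ≠ n - 1) :
    ((i + 1 : Fin n) : ℕ) = i + 1 := by
  rw [Fin.val_add, Fin.val_one', Nat.add_mod_mod, Nat.mod_eq_of_lt (by omega)]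

theorem add_one_eq_zero_of_eq_pred {i : Fin n} (hi : (i : ℕ) = n - 1) : i + 1 = 0 := by
  ext
  rw [Fin.val_add, Fin.val_one', Nat.add_mod_mod, hi, Nat.sub_add_cancel NeZero.one_le,
    Nat.mod_self, Fin.val_zero]

theorem cyclicMatrix_pow_mulVec_single_zero (a : R) {m : ℕ} (hm : m < n) :
    cyclicMatrix n a ^ m *ᵥ Pi.single 0 1 = Pi.single ⟨m, hm⟩ 1 := by
  induction m with
  | zero => rw [pow_zero, one_mulVec]; rfl
  | succ m ih =>
    have hne : m ≠ n - 1 := by omega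
    rw [pow_succ', ← mulVec_mulVec, ih (by omega), cyclicMatrix_mulVec_single, if_neg hne]
    congr 1
    exact Fin.ext (val_add_one_of_ne_pred hne)

theorem cyclicMatrix_pow_self (a : R) :
    cyclicMatrix n a ^ n = a • (1 : Matrix (Fin n) (Fin n) R) := by
  have hn := NeZero.pos n
  have hzero : cyclicMatrix n a ^ n *ᵥ Pi.single 0 1 = a • Pi.single 0 1 := by
    have hlast : n - 1 < n := by omega
    rw [← mul_pow_sub_one hn.ne', ← mulVec_mulVec, cyclicMatrix_pow_mulVec_single_zero a hlast,
      cyclicMatrix_mulVec_single, add_one_eq_zero_of_eq_pred rfl, if_pos rfl,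
      ← Pi.single_smul', smul_eq_mul, mul_one]
  refine ext_of_mulVec_single fun j => ?_
  rw [← cyclicMatrix_pow_mulVec_single_zero a j.2, mulVec_mulVec, ← pow_add, add_comm, pow_add,
    ← mulVec_mulVec, hzero, mulVec_smul, smul_mulVec, one_mulVec]

theorem diagonal_iterate_mul_cyclicMatrix (σ : R →+* R) {u : R} (hu : σ^[n] u = u) (a : R) :
    (diagonal fun i : Fin n => σ^[i] u) * cyclicMatrix n a =
      cyclicMatrix n a * (diagonal fun i : Fin n => σ^[i] u).map σ := by
  ext i j
  rw [diagonal_mul, diagonal_map (map_zero σ), mul_diagonal, mul_comm]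
  by_cases hij : i = j + 1
  · subst hij
    congr 1
    rw [← Function.iterate_succ_apply' σ]
    by_cases hj : (j : ℕ) = n - 1
    · rw [add_one_eq_zero_of_eq_pred hj, hj, Nat.succ_eq_add_one, Nat.sub_add_cancel NeZero.one_le,
        hu, Fin.val_zero, Function.iterate_zero_apply]
    · rw [val_add_one_of_ne_pred hj]
  · simp [cyclicMatrix, hij]

end CyclicMatrix

section CyclicProjector

variable {L : Type*} [Field L] {σ : L →+* L} {n s c : ℕ} [NeZero n] {γ u : L}

omit [NeZero n] in
theorem mapMatrix_iterate_diagonal_iterate (k : ℕ) :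
    σ.mapMatrix^[k] (diagonal fun i : Fin n => σ^[i] u) =
      diagonal fun i : Fin n => σ^[i] (σ^[k] u) := by
  induction k with
  | zero => rfl
  | succ k ih =>
    rw [Function.iterate_succ_apply', ih, RingHom.mapMatrix_apply, diagonal_map (map_zero σ)]
    simp only [Function.iterate_succ_apply', ← Function.iterate_succ_apply]

omit [NeZero n] in
theorem sum_mapMatrix_pow_iterate_diagonal_iterate
    (hut : ∑ l ∈ Finset.range c, (σ^[s])^[l] u = 1) :
    ∑ l ∈ Finset.range c, (σ.mapMatrix ^ s)^[l] (diagonal fun i : Fin n => σ^[i] u) = 1 := by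
  simp only [← Function.iterate_mul] at hut
  simp only [RingHom.coe_pow, ← Function.iterate_mul, mapMatrix_iterate_diagonal_iterate]
  have hfun : ∀ i : Fin n, ∑ l ∈ Finset.range c, σ^[i] (σ^[s * l] u) = 1 := fun i => by
    rw [← RingHom.coe_pow, ← map_sum, RingHom.coe_pow, hut, iterate_map_one]
  ext i j
  rcases eq_or_ne i j with rfl | hij
  · simp [Matrix.sum_apply, hfun]
  · simp [Matrix.sum_apply, hij]

/-- For `n = s * c` and `u` of trace `1` over the fixed field of `σ ^ s`, a projector commuting
with the `σ`-linear operator `cyclicMatrix n (γ ^ c) ∘ σ`: the average of the powers of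
`γ⁻¹ • cyclicMatrix n (γ ^ c) ^ s`, which has order dividing `c`, weighted by
`diag(u, σ u, …, σ ^ (n - 1) u)`. -/
def cyclicProjector (σ : L →+* L) (n s c : ℕ) [NeZero n] (γ u : L) : Matrix (Fin n) (Fin n) L :=
  (diagonal fun i : Fin n => σ^[i] u) *
    ∑ l ∈ Finset.range c, (γ⁻¹ • cyclicMatrix n (γ ^ c) ^ s) ^ l

theorem inv_smul_cyclicMatrix_pow_pow_eq_one (hn : n = s * c) (hγ : γ ≠ 0) :
    (γ⁻¹ • cyclicMatrix n (γ ^ c) ^ s) ^ c = 1 := by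
  rw [smul_pow, ← pow_mul, ← hn, cyclicMatrix_pow_self, smul_smul, ← mul_pow, inv_mul_cancel₀ hγ,
    one_pow, one_smul]

theorem mapMatrix_inv_smul_cyclicMatrix_pow (hσγ : σ γ = γ) :
    σ.mapMatrix (γ⁻¹ • cyclicMatrix n (γ ^ c) ^ s) = γ⁻¹ • cyclicMatrix n (γ ^ c) ^ s := by
  rw [RingHom.mapMatrix_apply, map_smul' _ _ _ (map_mul σ), map_inv₀, hσγ,
    ← RingHom.mapMatrix_apply, map_pow, RingHom.mapMatrix_apply, cyclicMatrix_map, map_pow, hσγ]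

theorem isIdempotentElem_cyclicProjector (hn : n = s * c) (hγ : γ ≠ 0) (hσγ : σ γ = γ)
    (hu : σ^[n] u = u) (hut : ∑ l ∈ Finset.range c, (σ^[s])^[l] u = 1) :
    IsIdempotentElem (cyclicProjector σ n s c γ u) := by
  have hC : σ.mapMatrix (cyclicMatrix n (γ ^ c)) = cyclicMatrix n (γ ^ c) := by
    rw [RingHom.mapMatrix_apply, cyclicMatrix_map, map_pow, hσγ]
  refine isIdempotentElem_mul_geom_sum (τ := σ.mapMatrix ^ s) ?_ ?_
    (inv_smul_cyclicMatrix_pow_pow_eq_one hn hγ) (sum_mapMatrix_pow_iterate_diagonal_iterate hut)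
  · rw [RingHom.coe_pow, Function.iterate_fixed (mapMatrix_inv_smul_cyclicMatrix_pow hσγ)]
  · rw [mul_smul_comm, mul_pow_eq_pow_mul_iterate hC (diagonal_iterate_mul_cyclicMatrix σ hu _),
      smul_mul_assoc, RingHom.coe_pow]

theorem cyclicProjector_mul_cyclicMatrix (hσγ : σ γ = γ) (hu : σ^[n] u = u) :
    cyclicProjector σ n s c γ u * cyclicMatrix n (γ ^ c) =
      cyclicMatrix n (γ ^ c) * (cyclicProjector σ n s c γ u).map σ := by
  set C := cyclicMatrix n (γ ^ c) with hC
  set N := ∑ l ∈ Finset.range c, (γ⁻¹ • C ^ s) ^ l with hN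
  set D : Matrix (Fin n) (Fin n) L := diagonal fun i : Fin n => σ^[i] u
  have hNC : Commute N C :=
    Commute.sum_left _ _ _ fun l _ => (((Commute.refl C).pow_left s).smul_left γ⁻¹).pow_left l
  have hσN : N.map σ = N := by
    rw [← RingHom.mapMatrix_apply]
    simp only [hN, map_sum, map_pow, hC, mapMatrix_inv_smul_cyclicMatrix_pow hσγ]
  calc D * N * C = D * C * N := by rw [mul_assoc, hNC.eq, mul_assoc]
    _ = C * (D.map σ * N) := by rw [diagonal_iterate_mul_cyclicMatrix σ hu, mul_assoc]
    _ = C * (D * N).map σ := by rw [Matrix.map_mul, hσN]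

theorem cyclicProjector_apply_zero (hn : n = s * c) {m : ℕ} (hmc : m < c) (hm : s * m < n) :
    cyclicProjector σ n s c γ u ⟨s * m, hm⟩ 0 = σ^[s * m] u * γ⁻¹ ^ m := by
  have hs : 0 < s := Nat.pos_of_ne_zero (left_ne_zero_of_mul (hn ▸ NeZero.ne n))
  have hcol : ∀ l ∈ Finset.range c, ((γ⁻¹ • cyclicMatrix n (γ ^ c) ^ s) ^ l) ⟨s * m, hm⟩ 0 =
      if m = l then γ⁻¹ ^ l else 0 := fun l hl => by
    have hl : s * l < n := hn ▸ Nat.mul_lt_mul_of_pos_left (Finset.mem_range.1 hl) hs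
    have hentry := congrFun (cyclicMatrix_pow_mulVec_single_zero (γ ^ c) hl) ⟨s * m, hm⟩
    simp only [mulVec_single_one, col_apply, Pi.single_apply, Fin.mk.injEq,
      Nat.mul_right_inj hs.ne'] at hentry
    rw [smul_pow, ← pow_mul, Matrix.smul_apply, hentry, smul_eq_mul, mul_ite, mul_one, mul_zero]
  rw [cyclicProjector, diagonal_mul, Matrix.sum_apply, Finset.sum_congr rfl hcol,
    Finset.sum_ite_eq, if_pos (Finset.mem_range.2 hmc)]

end CyclicProjector

section IntegerValuation

variable {L : Type*} [Field L] {v : AddValuation L (WithTop ℤ)}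

theorem map_zpow_of_map_eq_one (hϖ : v ϖ = 1) (d : ℤ) : v (ϖ ^ d) = (d : WithTop ℤ) := by
  have hnat : ∀ k : ℕ, v (ϖ ^ k) = ((k : ℤ) : WithTop ℤ) := fun k => by
    rw [AddValuation.map_pow, hϖ, nsmul_one]
    rfl
  obtain ⟨k, rfl | rfl⟩ := d.eq_nat_or_neg
  · rw [zpow_natCast, hnat]
  · rw [_root_.zpow_neg, zpow_natCast, AddValuation.map_inv, hnat,
      WithTop.LinearOrderedAddCommGroup.coe_neg]

variable {n : ℕ} [NeZero n]

theorem exists_coe_eq_of_nsmul_eq_nsmul_coe {m : ℕ} {d : ℤ} {w : WithTop ℤ}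
    (h : n • w = m • (d : WithTop ℤ)) : ∃ e : ℤ, w = e ∧ n * e = m * d := by
  rw [← WithTop.coe_nsmul, nsmul_eq_mul] at h
  induction w with
  | top =>
    obtain ⟨k, hk⟩ := Nat.exists_eq_succ_of_ne_zero (NeZero.ne n)
    rw [hk, succ_nsmul, WithTop.add_top] at h
    exact absurd h WithTop.top_ne_coe
  | coe e =>
    rw [← WithTop.coe_nsmul, nsmul_eq_mul] at h
    exact ⟨e, rfl, WithTop.coe_inj.1 h⟩

theorem map_det_cyclicMatrix {a : L} {d : ℤ} (ha : v a = d) :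
    v (cyclicMatrix n a).det = d := by
  have hpow : n • v (cyclicMatrix n a).det = n • (d : WithTop ℤ) := by
    rw [← AddValuation.map_pow, ← det_pow, cyclicMatrix_pow_self, det_smul, det_one, mul_one,
      Fintype.card_fin, AddValuation.map_pow, ha]
  obtain ⟨e, he, hne⟩ := exists_coe_eq_of_nsmul_eq_nsmul_coe hpow
  rw [he, mul_left_cancel₀ (Nat.cast_ne_zero.2 (NeZero.ne n)) hne]

end IntegerValuation

section Criterion

variable {L : Type*} [Field L] {σ : L →+* L} {n : ℕ} [NeZero n]

theorem exists_sum_iterate_iterate_eq_one {s c : ℕ} (hc : 0 < c) (hs : 0 < s) {x : L}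
    (hx : Function.minimalPeriod σ x = s * c) :
    ∃ u, σ^[s * c] u = u ∧ ∑ l ∈ Finset.range c, (σ^[s])^[l] u = 1 := by
  have hc' : Function.minimalPeriod (σ ^ s) x = c := by
    rw [RingHom.coe_pow, Function.minimalPeriod_iterate_eq_div_gcd hs.ne', hx,
      Nat.gcd_mul_right_left, Nat.mul_div_cancel_left _ hs]
  have hu := exists_sum_iterate_eq_one (σ ^ s) (a := x) (hc' ▸ hc)
  rwa [hc', RingHom.coe_pow, ← Function.iterate_mul] at hu

theorem not_isSuperbasic_of_eq_cyclicMatrix {s c : ℕ} (hn : n = s * c) (hc : 1 < c) {x : L}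
    (hx : Function.minimalPeriod σ x = n) {γ : L} (hγ : γ ≠ 0) (hσγ : σ γ = γ)
    {b : GL (Fin n) L} (hb : (b : Matrix (Fin n) (Fin n) L) = cyclicMatrix n (γ ^ c)) :
    ¬ IsSuperbasic σ b := by
  have hs : 0 < s := Nat.pos_of_ne_zero (left_ne_zero_of_mul (hn ▸ NeZero.ne n))
  obtain ⟨u, hu, hut⟩ := exists_sum_iterate_iterate_eq_one (by omega : 0 < c) hs (hn ▸ hx)
  rw [← hn] at hu
  have hu0 : u ≠ 0 := by
    rintro rfl
    simp [iterate_map_zero, ← Function.iterate_mul] at hut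
  refine not_isSuperbasic_of_isIdempotentElem (E := cyclicProjector σ n s c γ u)
    (isIdempotentElem_cyclicProjector hn hγ hσγ hu hut) (fun h => ?_) (fun h => ?_)
    (hb ▸ cyclicProjector_mul_cyclicMatrix hσγ hu)
  · have hentry := cyclicProjector_apply_zero (σ := σ) (γ := γ) (u := u) hn (m := 0) (by omega)
      (NeZero.pos n)
    rw [h] at hentry
    simp [eq_comm, hu0] at hentry
  · have hentry := cyclicProjector_apply_zero (σ := σ) (γ := γ) (u := u) hn hc
      (hn ▸ Nat.mul_lt_mul_of_pos_left hc hs)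
    rw [h, one_apply_ne (by simpa [Fin.ext_iff] using hs.ne'), mul_one,
      ← RingHom.coe_pow] at hentry
    exact mul_ne_zero ((map_ne_zero (σ ^ s)).2 hu0) (pow_ne_zero 1 (inv_ne_zero hγ)) hentry.symm

theorem not_isSuperbasic_of_eq_cyclicMatrix_zpow {c : ℕ} (hc : 1 < c) (hcn : c ∣ n) {d : ℤ}
    (hcd : (c : ℤ) ∣ d) {x : L} (hx : Function.minimalPeriod σ x = n) {ϖ : L} (hϖ : ϖ ≠ 0)
    (hσϖ : σ ϖ = ϖ) {b : GL (Fin n) L}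
    (hb : (b : Matrix (Fin n) (Fin n) L) = cyclicMatrix n (ϖ ^ d)) : ¬ IsSuperbasic σ b := by
  obtain ⟨s, hs⟩ := hcn
  obtain ⟨δ, rfl⟩ := hcd
  refine not_isSuperbasic_of_eq_cyclicMatrix (hs.trans (mul_comm c s)) hc hx
    (zpow_ne_zero δ hϖ) (by rw [map_zpow₀, hσϖ]) ?_
  rw [hb, ← zpow_natCast, ← _root_.zpow_mul, mul_comm]

variable {v : AddValuation L (WithTop ℤ)} {ϖ : L}

theorem isSuperbasic_of_eq_cyclicMatrix (hv : ∀ x, v (σ x) = v x) {a : L} (hσa : σ a = a)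
    {d : ℤ} (ha : v a = d) (hd : Int.gcd d n = 1) {b : GL (Fin n) L}
    (hb : (b : Matrix (Fin n) (Fin n) L) = cyclicMatrix n a) : IsSuperbasic σ b := by
  rintro ⟨g, S, hS, hS', hblock⟩
  have hval := nsmul_map_det_submatrix_twistedConj hv (by rw [hb, cyclicMatrix_map, hσa])
    (by rw [hb, cyclicMatrix_pow_self]) g S fun i j hi hj => hblock i j (.inr ⟨hj, hi⟩)
  rw [ha] at hval
  obtain ⟨e, -, hne⟩ := exists_coe_eq_of_nsmul_eq_nsmul_coe hval
  have hcard : n ∣ S.card := by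
    exact_mod_cast (Int.isCoprime_iff_gcd_eq_one.2 hd).symm.dvd_of_dvd_mul_right ⟨e, hne.symm⟩
  have hlt : S.card < n := by
    simpa using Finset.card_lt_card (Finset.ssubset_univ_iff.2 hS')
  exact hlt.not_ge (Nat.le_of_dvd hS.card_pos hcard)

/-- `b` is basic if it is `σ`-conjugate to the standard representative of some slope `e / n`, for
a uniformizer `ϖ` fixed by `σ`. -/
def IsBasic (σ : L →+* L) (ϖ : L) (b : GL (Fin n) L) : Prop :=
  ∃ (g : GL (Fin n) L) (e : ℤ),
    (twistedConj σ g b : Matrix (Fin n) (Fin n) L) = cyclicMatrix n (ϖ ^ e)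

theorem basic_superbasic_iff_gcd_valuation_det_general (hv : ∀ x, v (σ x) = v x) (hϖ : v ϖ = 1)
    (hσϖ : σ ϖ = ϖ) (hσ : ∃ x, Function.minimalPeriod σ x = n) {b : GL (Fin n) L}
    (hb : IsBasic σ ϖ b) {d : ℤ} (hd : v (b : Matrix (Fin n) (Fin n) L).det = d) :
    IsSuperbasic σ b ↔ Int.gcd d n = 1 := by
  obtain ⟨g, e, hg⟩ := hb
  obtain rfl : d = e := by
    rw [← map_det_twistedConj hv g, hg, map_det_cyclicMatrix (map_zpow_of_map_eq_one hϖ e)] at hd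
    exact (WithTop.coe_inj.1 hd).symm
  rw [← isSuperbasic_twistedConj_iff σ g b]
  constructor
  · contrapose
    intro hgcd
    obtain ⟨x, hx⟩ := hσ
    have hgcd0 : Int.gcd d n ≠ 0 := fun h =>
      NeZero.ne n (Int.natCast_eq_zero.1 (Int.gcd_eq_zero_iff.1 h).2)
    have hc : 1 < Int.gcd d n := Nat.one_lt_iff_ne_zero_and_ne_one.2 ⟨hgcd0, hgcd⟩
    exact not_isSuperbasic_of_eq_cyclicMatrix_zpow hc
      (Int.natCast_dvd_natCast.1 (Int.gcd_dvd_right d n)) (Int.gcd_dvd_left d n) hx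
      (fun h => by simp [h] at hϖ) hσϖ hg
  · exact fun hgcd => isSuperbasic_of_eq_cyclicMatrix hv (by rw [map_zpow₀, hσϖ])
      (map_zpow_of_map_eq_one hϖ d) hgcd hg

end Criterion

section LaurentSeries

open LaurentSeries

variable {K} {φ : K →+* K} {σ : K⸨X⸩ →+* K⸨X⸩}

theorem orderTop_map_of_coeff_map (hσ : ∀ x k, (σ x).coeff k = φ (x.coeff k)) (x : K⸨X⸩) :
    (σ x).orderTop = x.orderTop := by
  rcases eq_or_ne x 0 with rfl | hx
  · rw [map_zero]
  · rw [← HahnSeries.order_eq_orderTop_of_ne_zero hx]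
    have hsupp : (σ x).support = x.support := by
      ext k
      simp [hσ]
    refine HahnSeries.orderTop_eq_of_le ?_ fun k hk => ?_
    · simpa [hsupp] using HahnSeries.coeff_order_eq_zero.not.2 hx
    · exact HahnSeries.order_le_of_coeff_ne_zero (by simpa [hsupp] using hk)

theorem map_single_of_coeff_map (hσ : ∀ x k, (σ x).coeff k = φ (x.coeff k)) (d : ℤ) (a : K) :
    σ (HahnSeries.single d a) = HahnSeries.single d (φ a) := by
  ext k
  rw [hσ]
  rcases eq_or_ne k d with rfl | hk
  · simp
  · simp [hk]

theorem minimalPeriod_single_of_coeff_map (hσ : ∀ x k, (σ x).coeff k = φ (x.coeff k)) (d : ℤ)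
    (a : K) :
    Function.minimalPeriod σ (HahnSeries.single d a) = Function.minimalPeriod φ a := by
  refine Function.minimalPeriod_eq_minimalPeriod_iff.2 fun m => ?_
  have hiter := (show Function.Semiconj (HahnSeries.single d) φ σ from
    fun a => (map_single_of_coeff_map hσ d a).symm).iterate_right m a
  rw [Function.IsPeriodicPt, Function.IsFixedPt, ← hiter,
    (HahnSeries.single_injective d).eq_iff]
  rfl

theorem basicRep_eq_cyclicMatrix (n : ℕ) [NeZero n] (d : ℤ) :
    basicRep K n d = cyclicMatrix n (HahnSeries.single 1 (1 : K) ^ d) := by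
  rw [← RatFunc.single_zpow]
  rfl

theorem isSuperbasic_iff_gcd_order_det_of_coeff_map
    (hσ : ∀ x k, (σ x).coeff k = φ (x.coeff k)) {n : ℕ} [NeZero n]
    (hφ : ∃ a, Function.minimalPeriod φ a = n) {b : GL (Fin n) K⸨X⸩}
    (hb : IsBasic σ (HahnSeries.single 1 1) b) :
    IsSuperbasic σ b ↔ Int.gcd (b : Matrix (Fin n) (Fin n) K⸨X⸩).det.order n = 1 := by
  obtain ⟨a, ha⟩ := hφ
  have hdet : (b : Matrix (Fin n) (Fin n) K⸨X⸩).det ≠ 0 := (b.isUnit.map detMonoidHom).ne_zero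
  refine basic_superbasic_iff_gcd_valuation_det_general (v := HahnSeries.addVal ℤ K)
    (orderTop_map_of_coeff_map hσ) (HahnSeries.orderTop_single one_ne_zero) ?_
    ⟨HahnSeries.single 0 a, ?_⟩ hb (HahnSeries.addVal_apply_of_ne hdet)
  · rw [map_single_of_coeff_map hσ, map_one]
  · rw [minimalPeriod_single_of_coeff_map hσ, ha]

end LaurentSeries

section Frobenius

theorem minimalPeriod_iterateFrobenius_of_isPrimitiveRoot {R : Type*} [CommRing R] [IsDomain R]
    {p m n : ℕ} [Fact p.Prime] [CharP R p] (hm : 0 < m) (hn : 0 < n) {ζ : R}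
    (hζ : IsPrimitiveRoot ζ ((p ^ m) ^ n - 1)) :
    Function.minimalPeriod (iterateFrobenius R p m) ζ = n := by
  have hq : 1 < p ^ m := Nat.one_lt_pow hm.ne' (Fact.out : p.Prime).one_lt
  have hζ0 : ζ ≠ 0 := hζ.ne_zero (Nat.sub_ne_zero_of_lt (Nat.one_lt_pow hn.ne' hq))
  have hperiod : ∀ j, Function.IsPeriodicPt (iterateFrobenius R p m) j ζ ↔
      (p ^ m) ^ n - 1 ∣ (p ^ m) ^ j - 1 := fun j => by
    rw [← hζ.pow_eq_one_iff_dvd, Function.IsPeriodicPt, Function.IsFixedPt,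
      ← iterateFrobenius_mul_apply, iterateFrobenius_def, pow_mul,
      ← Nat.sub_add_cancel (Nat.one_le_pow j (p ^ m) (by omega)), pow_succ, Nat.add_sub_cancel,
      mul_eq_right₀ hζ0]
  have hself := (hperiod n).2 dvd_rfl
  refine le_antisymm (hself.minimalPeriod_le hn) ?_
  have hpos := hself.minimalPeriod_pos hn
  have hle := Nat.le_of_dvd (Nat.sub_pos_of_lt (Nat.one_lt_pow hpos.ne' hq))
    ((hperiod _).1 (Function.isPeriodicPt_minimalPeriod _ ζ))
  rw [Nat.sub_le_sub_iff_right (Nat.one_le_pow _ _ (by omega))] at hle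
  exact (Nat.pow_le_pow_iff_right hq).1 hle

theorem exists_minimalPeriod_iterateFrobenius_eq {p m n : ℕ} [Fact p.Prime] [CharP K p]
    [IsSepClosed K] (hm : 0 < m) (hn : 0 < n) :
    ∃ ζ : K, Function.minimalPeriod (iterateFrobenius K p m) ζ = n := by
  have hp1 : 1 < p := (Fact.out : p.Prime).one_lt
  have hne : NeZero (((p ^ m) ^ n - 1 : ℕ) : K) := by
    rw [← pow_mul, Nat.cast_pred (by positivity), Nat.cast_pow, CharP.cast_eq_zero,
      zero_pow (by positivity), zero_sub]
    exact ⟨neg_ne_zero.2 one_ne_zero⟩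
  obtain ⟨ζ, hζ⟩ := HasEnoughRootsOfUnity.exists_primitiveRoot K ((p ^ m) ^ n - 1)
  exact ⟨ζ, minimalPeriod_iterateFrobenius_of_isPrimitiveRoot hm hn hζ⟩

end Frobenius

/-- Proposition 5.10 (key observation): a basic element `b ∈ GL_n(L)` is superbasic if and
only if the valuation of `det b` is relatively prime to `n`.  Here `σ` is the entrywise
Frobenius of `L = K((ε))` over `F = 𝔽_q((ε))`; `b` is basic iff it is `σ`-conjugate to the
standard isoclinic representative of slope `val(det b)/n`; and `b` is superbasic iff no
`σ`-conjugate of `b` lies in a proper (standard, block-diagonal) Levi subgroup of `GL_n`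
over `F`. -/
theorem basic_superbasic_iff_gcd_valuation_det
    (p q m : ℕ) (hp : p.Prime) (hq : q = p ^ m) (hm : 1 ≤ m)
    [IsAlgClosed K] [CharP K p]
    (σL : LaurentSeries K →+* LaurentSeries K)
    (hσL : ∀ (x : LaurentSeries K) (k : ℤ), (σL x).coeff k = (x.coeff k) ^ q)
    (n : ℕ) [NeZero n]
    (b : GL (Fin n) (LaurentSeries K))
    -- `b` is basic
    (hb : ∃ g : GL (Fin n) (LaurentSeries K),
      ((g⁻¹ * b * Units.map (RingHom.mapMatrix σL).toMonoidHom g :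
          GL (Fin n) (LaurentSeries K)) : Matrix (Fin n) (Fin n) (LaurentSeries K))
        = basicRep K n (((b : Matrix (Fin n) (Fin n) (LaurentSeries K)).det).order)) :
    -- superbasic ↔ gcd(val(det b), n) = 1
    (¬ ∃ (g : GL (Fin n) (LaurentSeries K)) (S : Finset (Fin n)),
        S.Nonempty ∧ S ≠ Finset.univ ∧
        ∀ i j : Fin n, (i ∈ S ∧ j ∉ S) ∨ (j ∈ S ∧ i ∉ S) →
          ((g⁻¹ * b * Units.map (RingHom.mapMatrix σL).toMonoidHom g :
              GL (Fin n) (LaurentSeries K)) :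
            Matrix (Fin n) (Fin n) (LaurentSeries K)) i j = 0) ↔
    Int.gcd (((b : Matrix (Fin n) (Fin n) (LaurentSeries K)).det).order) (n : ℤ) = 1 := by
  have := Fact.mk hp
  subst hq
  obtain ⟨g, hg⟩ := hb
  exact isSuperbasic_iff_gcd_order_det_of_coeff_map (φ := iterateFrobenius K p m) hσL
    (exists_minimalPeriod_iterateFrobenius_eq K hm (NeZero.pos n))
    ⟨g, _, hg.trans (basicRep_eq_cyclicMatrix n _)⟩
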